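/- arXiv:2105.07449 — 4 statements merged into one kernel-verified Lean document; each statement's English description precedes it below -/
import Mathlib

section
/- Fix positive integers n, k and finite nonempty supports A_1,…,A_k ⊆ ℕ^n. There exists a nonzero polynomial G in the coefficients c = (c_{j,α})_{j∈[k], α∈A_j} and the data u = (u_1,…,u_n) such that for every choice of complex coefficients and data with G(c,u) ≠ 0, the ML system L(F) of the sparse system F = (f_1,…,f_k), f_j = Σ_{α∈A_j} c_{j,α} x^α, with data u has only finitely many solutions (x,λ) ∈ ℂ^n × ℂ^k, and moreover every such solution lies in (ℂ*)^n × (ℂ*)^k (all coordinates nonzero). -/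
/-!
The proof is a dimension count, carried out with transcendence degrees.

Generic data satisfy `u_i ≠ 0` for all `i`, and then `ℓ_i = 0` forces `x_i ≠ 0`. Over the torus the
incidence variety `{(x, λ, c, u) : (x, λ) solves L(F)}` is parametrised by an open subset of an
affine space whose dimension is that of the space of `(c, u)`. Namely, let `z_i = x_i⁻¹` and let
`t_{j,α} = c_{j,α} x^α` be the values of the terms of `f_j`. The equation `f_j = 0` says
`Σ_α t_{j,α} = 0`, so that one chosen term `t_{j,a_j}` is determined by the others, while
`c_{j,α} = z^α t_{j,α}` and `u_i = Σ_j λ_j Σ_α α_i t_{j,α}` are polynomial in `(z, λ, t)`.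
The free variables are the `z_i`, the `λ_j` and the `t_{j,α}` with `α ≠ a_j`. Giving `λ_j` the vacant
index `(j, a_j)` turns the parametrisation into a polynomial self-map `paramMap` of `ℂ^τ`,
where `τ` is the finite index set of the coordinates of `(c, u)`.

It remains to see that the generic fibre of any polynomial self-map `g` of `ℂ^τ` is finite and
contained in `(ℂ*)^τ` (`exists_generic_fiber`). For each coordinate function `X_b`, the `|τ| + 1`
polynomials `g_a` and `X_b` in `|τ|` variables satisfy an algebraic relation `Q(g, X_b) = 0`
(`exists_eliminant`), which can be taken to have nonzero constant term `Q_0` with respect to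
its last variable, since `X_b` is not a zero divisor. When `Q_0(y) ≠ 0`, the `b`-th
coordinate of a point over `y` is a root of the polynomial `Q(y, T)`, which is nonzero
and does not vanish at `T = 0`.
-/

open MvPolynomial

/-- The polynomial `ℓ_i = u_i - x_i · Σ_j λ_j ∂f_j/∂x_i` of the ML system,
as an element of `ℂ[x_1,…,x_n,λ_1,…,λ_k]` (variables indexed by `Fin n ⊕ Fin k`). -/
noncomputable def mlEll (n k : ℕ) (f : Fin k → MvPolynomial (Fin n) ℂ)
    (u : Fin n → ℂ) (i : Fin n) : MvPolynomial (Fin n ⊕ Fin k) ℂ :=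
  C (u i) - X (Sum.inl i) *
    ∑ j : Fin k, X (Sum.inr j) * rename Sum.inl (pderiv i (f j))

/-- The solution set of the ML system `L(F)` in `ℂ^n × ℂ^k`. -/
def mlSol (n k : ℕ) (f : Fin k → MvPolynomial (Fin n) ℂ) (u : Fin n → ℂ) :
    Set ((Fin n → ℂ) × (Fin k → ℂ)) :=
  {p | (∀ i, eval (Sum.elim p.1 p.2) (mlEll n k f u i) = 0) ∧
       (∀ j, eval p.1 (f j) = 0)}

/-- The Newton polytope of a multivariate polynomial. -/
noncomputable def newt {σ : Type*} (f : MvPolynomial σ ℂ) : Set (σ → ℝ) :=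
  convexHull ℝ ((fun d : σ →₀ ℕ => fun i => ((d i : ℕ) : ℝ)) '' ↑f.support)

/-- `⟨w, x⟩` for an integer weight vector `w`. -/
def wdot {σ : Type*} [Fintype σ] (w : σ → ℤ) (x : σ → ℝ) : ℝ :=
  ∑ i, (w i : ℝ) * x i

/-- The face of `P` exposed by `w`. -/
def faceOf {σ : Type*} [Fintype σ] (w : σ → ℤ) (P : Set (σ → ℝ)) : Set (σ → ℝ) :=
  {x ∈ P | ∀ y ∈ P, wdot w x ≤ wdot w y}

/-- `val_w(P) = min_{x ∈ P} ⟨w,x⟩`. -/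
noncomputable def valOf {σ : Type*} [Fintype σ] (w : σ → ℤ) (P : Set (σ → ℝ)) : ℝ :=
  sInf (wdot w '' P)

/-- The initial polynomial `init_w(f)`: the sum of the terms of `f` whose
exponent vectors minimize `⟨w,·⟩` over the support of `f`. -/
noncomputable def initw {σ : Type*} [Fintype σ] (w : σ → ℤ) (f : MvPolynomial σ ℂ) :
    MvPolynomial σ ℂ :=
  ∑ d ∈ f.support.filter
      (fun d => ∀ d' ∈ f.support, ∑ i, w i * (d i : ℤ) ≤ ∑ i, w i * (d' i : ℤ)),
    monomial d (coeff d f)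

/-- The sparse polynomial with support `A` and coefficients `c`. -/
noncomputable def sparsePoly (n : ℕ) (A : Finset (Fin n →₀ ℕ)) (c : (Fin n →₀ ℕ) → ℂ) :
    MvPolynomial (Fin n) ℂ :=
  ∑ α ∈ A, monomial α (c α)

/-- A nonzero polynomial `h` in finitely many variables satisfies a relation `Q(g, h) = 0` over any
polynomial self-map `g`, with `Q` of nonzero constant term in its last variable. -/
lemma exists_eliminant {τ : Type} [Finite τ] (g : τ → MvPolynomial τ ℂ) (h : MvPolynomial τ ℂ)
    (hh : h ≠ 0) : ∃ Q : Polynomial (MvPolynomial τ ℂ), Q.coeff 0 ≠ 0 ∧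
      Q.eval₂ (aeval g).toRingHom h = 0 := by
  have hdep : ¬ AlgebraicIndependent ℂ (fun o : Option τ => o.elim h g) := by
    intro hi
    have h1 := hi.cardinalMk_le_trdeg
    rw [MvPolynomial.trdeg_of_isDomain] at h1
    have : Fintype τ := Fintype.ofFinite τ
    simp only [Cardinal.mk_fintype, Fintype.card_option, Cardinal.lift_id] at h1
    have h2 : Fintype.card τ + 1 ≤ Fintype.card τ := by exact_mod_cast h1
    omega
  rw [algebraicIndependent_iff] at hdep
  push Not at hdep
  obtain ⟨p, hp, hp0⟩ := hdep
  -- View the relation as a univariate polynomial over `MvPolynomial τ ℂ`, the variable `none`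
  -- (whose value is `h`) being the univariate one.
  have key : ∀ p : MvPolynomial (Option τ) ℂ, (optionEquivLeft ℂ τ p).eval₂ (aeval g).toRingHom h
      = aeval (fun o : Option τ => o.elim h g) p := by
    intro p
    induction p using MvPolynomial.induction_on with
    | C a => simp
    | add p q hp hq => rw [map_add, Polynomial.eval₂_add, hp, hq, map_add]
    | mul_X p o hp =>
      rw [map_mul, Polynomial.eval₂_mul, hp, map_mul]
      cases o <;> simp [optionEquivLeft_X_some, optionEquivLeft_X_none]
  -- Cancel the largest power of the last variable, to make the constant term nonzero.
  obtain ⟨Q, hQ, hndvd⟩ := (optionEquivLeft ℂ τ p).exists_eq_pow_rootMultiplicity_mul_and_not_dvd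
    (by simpa using hp0) 0
  refine ⟨Q, ?_, ?_⟩
  · simpa [Polynomial.X_dvd_iff] using hndvd
  · have h1 := key p
    rw [hp, hQ, Polynomial.eval₂_mul] at h1
    refine (mul_eq_zero.mp h1).resolve_left ?_
    simpa [Polynomial.eval₂_pow] using fun hz => absurd hz hh

/-- For generic `y`, the `b`-th coordinate takes only finitely many values on the fibre of `g`
over `y`, all nonzero. -/
lemma exists_generic_coord {τ : Type} [Finite τ] (g : τ → MvPolynomial τ ℂ) (b : τ) :
    ∃ G : MvPolynomial τ ℂ, G ≠ 0 ∧ ∀ y : τ → ℂ, eval y G ≠ 0 →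
      ∃ S : Set ℂ, S.Finite ∧ 0 ∉ S ∧ ∀ s : τ → ℂ, (∀ a, eval s (g a) = y a) → s b ∈ S := by
  obtain ⟨Q, hQ0, hQ⟩ := exists_eliminant g (X b) (X_ne_zero b)
  refine ⟨Q.coeff 0, hQ0, fun y hy => ?_⟩
  set q : Polynomial ℂ := Q.map (eval y) with hq
  have hq0 : q.coeff 0 ≠ 0 := by simpa [hq] using hy
  have hqne : q ≠ 0 := fun h => hq0 (by simp [h])
  refine ⟨{t | q.IsRoot t}, Polynomial.finite_setOfPred_isRoot hqne, ?_, fun s hs => ?_⟩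
  · simpa [← Polynomial.coeff_zero_eq_eval_zero] using hq0
  · have h1 := congrArg (eval s) hQ
    rw [Polynomial.hom_eval₂, map_zero] at h1
    have h2 : (eval s).comp (aeval g).toRingHom = eval y := by
      apply MvPolynomial.ringHom_ext <;> simp [hs]
    rw [h2] at h1
    simpa [hq, Polynomial.IsRoot, Polynomial.eval_map] using h1

/-- The fibre of a polynomial self-map of `ℂ^τ` over a generic point is finite and has no point with
a vanishing coordinate. -/
theorem exists_generic_fiber {τ : Type} [Finite τ] (g : τ → MvPolynomial τ ℂ) :
    ∃ G : MvPolynomial τ ℂ, G ≠ 0 ∧ ∀ y : τ → ℂ, eval y G ≠ 0 →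
      {s : τ → ℂ | ∀ a, eval s (g a) = y a}.Finite ∧
      ∀ s : τ → ℂ, (∀ a, eval s (g a) = y a) → ∀ b, s b ≠ 0 := by
  have : Fintype τ := Fintype.ofFinite τ
  choose G hG0 hG using exists_generic_coord g
  refine ⟨∏ b, G b, Finset.prod_ne_zero_iff.mpr fun b _ => hG0 b, fun y hy => ?_⟩
  rw [map_prod, Finset.prod_ne_zero_iff] at hy
  choose S hSf hS0 hS using fun b => hG b y (hy b (Finset.mem_univ b))
  exact ⟨(Set.Finite.pi' hSf).subset fun s hs b => hS b s hs,
    fun s hs b hb => hS0 b (hb ▸ hS b s hs)⟩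

/-- Index type of the coefficients `c_{j,α}` that actually occur: `j` and `α ∈ A_j`. -/
abbrev CoeffIdx {n k : ℕ} (A : Fin k → Finset (Fin n →₀ ℕ)) : Type :=
  (j : Fin k) × {α : Fin n →₀ ℕ // α ∈ A j}

/-- The polynomial giving the term value `t_{j,α} = c_{j,α} x^α` in the parametrisation: a free
variable for `α ≠ a_j`, and minus the sum of these free variables for `α = a_j`, which encodes
`f_j(x) = 0`. The variable of index `(j, a_j)` does not occur; it stands for `λ_j`. -/
noncomputable def termPoly {n k : ℕ} (A : Fin k → Finset (Fin n →₀ ℕ)) (a : ∀ j, {α // α ∈ A j})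
    (j : Fin k) (α : {α // α ∈ A j}) : MvPolynomial (CoeffIdx A ⊕ Fin n) ℂ :=
  if α = a j then -∑ β ∈ Finset.univ.erase (a j), X (Sum.inl ⟨j, β⟩) else X (Sum.inl ⟨j, α⟩)

/-- The parametrisation of the incidence variety over the torus, as a polynomial self-map. The source
variables are `z_i = x_i⁻¹` at index `i`, `λ_j` at index `(j, a_j)`, and `t_{j,α}` at the other
indices `(j, α)`; the components are `c_{j,α} = z^α t_{j,α}` and
`u_i = Σ_j λ_j Σ_α α_i t_{j,α}`. -/
noncomputable def paramMap {n k : ℕ} (A : Fin k → Finset (Fin n →₀ ℕ)) (a : ∀ j, {α // α ∈ A j}) :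
    CoeffIdx A ⊕ Fin n → MvPolynomial (CoeffIdx A ⊕ Fin n) ℂ
  | Sum.inl p => (∏ i, X (Sum.inr i) ^ (p.2.1 i)) * termPoly A a p.1 p.2
  | Sum.inr i => ∑ j, X (Sum.inl ⟨j, a j⟩) *
      ∑ α : {α // α ∈ A j}, C ((α.1 i : ℕ) : ℂ) * termPoly A a j α

/-- The point of the source of `paramMap` that corresponds to `p = (x, λ)` and the coefficients `c`;
meaningful when all `x_i` are nonzero. -/
noncomputable def paramPoint {n k : ℕ} (A : Fin k → Finset (Fin n →₀ ℕ)) (a : ∀ j, {α // α ∈ A j})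
    (c : Fin k → (Fin n →₀ ℕ) → ℂ) (p : (Fin n → ℂ) × (Fin k → ℂ)) : CoeffIdx A ⊕ Fin n → ℂ
  | Sum.inl q => if q.2 = a q.1 then p.2 q.1 else c q.1 q.2 * ∏ i, p.1 i ^ (q.2.1 i)
  | Sum.inr i => (p.1 i)⁻¹

lemma eval_sparsePoly {n : ℕ} (A : Finset (Fin n →₀ ℕ)) (c : (Fin n →₀ ℕ) → ℂ) (x : Fin n → ℂ) :
    eval x (sparsePoly n A c) = ∑ α ∈ A, c α * ∏ i, x i ^ (α i) := by
  simp [sparsePoly, eval_monomial, Finsupp.prod_fintype]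

/-- The logarithmic derivative `x_i ∂/∂x_i` multiplies the term of exponent `α` by `α_i`. -/
lemma mul_eval_pderiv_sparsePoly {n : ℕ} (A : Finset (Fin n →₀ ℕ)) (c : (Fin n →₀ ℕ) → ℂ)
    (x : Fin n → ℂ) (i : Fin n) :
    x i * eval x (pderiv i (sparsePoly n A c))
      = ∑ α ∈ A, (α i : ℂ) * (c α * ∏ i, x i ^ (α i)) := by
  have h : X i * pderiv i (sparsePoly n A c) = ∑ α ∈ A, α i • monomial α (c α) := by
    simp only [sparsePoly, map_sum, Finset.mul_sum, X_mul_pderiv_monomial]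
  have h' := congrArg (eval x) h
  rw [map_mul, eval_X] at h'
  rw [h', map_sum]
  refine Finset.sum_congr rfl fun α _ => ?_
  rw [nsmul_eq_mul, map_mul, map_natCast, eval_monomial, Finsupp.prod_fintype _ _ (by simp)]

lemma mem_mlSol_iff {n k : ℕ} (A : Fin k → Finset (Fin n →₀ ℕ)) (c : Fin k → (Fin n →₀ ℕ) → ℂ)
    (u : Fin n → ℂ) (p : (Fin n → ℂ) × (Fin k → ℂ)) :
    p ∈ mlSol n k (fun j => sparsePoly n (A j) (c j)) u ↔
      (∀ i, p.1 i * ∑ j, p.2 j * eval p.1 (pderiv i (sparsePoly n (A j) (c j))) = u i) ∧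
      ∀ j, eval p.1 (sparsePoly n (A j) (c j)) = 0 := by
  have hc : (Sum.elim p.1 p.2) ∘ Sum.inl = p.1 := rfl
  simp only [mlSol, mlEll, Set.mem_ofPred_eq, map_sub, map_mul, map_sum, eval_C, eval_X,
    Sum.elim_inl, Sum.elim_inr, eval_rename, hc, sub_eq_zero]
  simp only [eq_comm]

lemma eval_termPoly {n k : ℕ} (A : Fin k → Finset (Fin n →₀ ℕ)) (a : ∀ j, {α // α ∈ A j})
    (c : Fin k → (Fin n →₀ ℕ) → ℂ) (p : (Fin n → ℂ) × (Fin k → ℂ)) (j : Fin k)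
    (hf : eval p.1 (sparsePoly n (A j) (c j)) = 0) (α : {α // α ∈ A j}) :
    eval (paramPoint A a c p) (termPoly A a j α) = c j α * ∏ i, p.1 i ^ (α.1 i) := by
  by_cases h : α = a j
  · subst h
    rw [eval_sparsePoly, ← Finset.sum_coe_sort,
      ← Finset.add_sum_erase _ _ (Finset.mem_univ (a j))] at hf
    have : ∑ β ∈ Finset.univ.erase (a j), eval (paramPoint A a c p) (X (Sum.inl ⟨j, β⟩))
        = ∑ β ∈ Finset.univ.erase (a j), c j β * ∏ i, p.1 i ^ (β.1 i) :=
      Finset.sum_congr rfl fun β hβ => by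
        rw [eval_X, paramPoint, if_neg (Finset.ne_of_mem_erase hβ)]
    rw [termPoly, if_pos rfl, map_neg, map_sum, this]
    exact (eq_neg_of_add_eq_zero_left hf).symm
  · simp [termPoly, paramPoint, h]

/-- A solution of the ML system in the torus yields a point of the fibre of `paramMap` over
`(c, u)`. -/
lemma eval_paramMap {n k : ℕ} (A : Fin k → Finset (Fin n →₀ ℕ)) (a : ∀ j, {α // α ∈ A j})
    (c : Fin k → (Fin n →₀ ℕ) → ℂ) (u : Fin n → ℂ) (p : (Fin n → ℂ) × (Fin k → ℂ))
    (hp : p ∈ mlSol n k (fun j => sparsePoly n (A j) (c j)) u) (hx : ∀ i, p.1 i ≠ 0)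
    (b : CoeffIdx A ⊕ Fin n) :
    eval (paramPoint A a c p) (paramMap A a b)
      = Sum.elim (fun q : CoeffIdx A => c q.1 q.2) u b := by
  obtain ⟨hl, hf⟩ := (mem_mlSol_iff A c u p).mp hp
  rcases b with q | i
  · rw [paramMap, map_mul, eval_termPoly A a c p q.1 (hf q.1), map_prod, mul_left_comm,
      ← Finset.prod_mul_distrib, Finset.prod_eq_one, mul_one, Sum.elim_inl]
    intro i _
    rw [map_pow, eval_X, paramPoint, ← mul_pow, inv_mul_cancel₀ (hx i), one_pow]
  · rw [Sum.elim_inr, ← hl i, paramMap, map_sum, Finset.mul_sum]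
    refine Finset.sum_congr rfl fun j _ => ?_
    rw [mul_left_comm, mul_eval_pderiv_sparsePoly, map_mul, map_sum, eval_X,
      ← Finset.sum_coe_sort (A j)]
    congr 1
    · simp [paramPoint]
    · exact Finset.sum_congr rfl fun α _ => by
        rw [map_mul, eval_C, eval_termPoly A a c p j (hf j)]

lemma paramPoint_injective {n k : ℕ} (A : Fin k → Finset (Fin n →₀ ℕ)) (a : ∀ j, {α // α ∈ A j})
    (c : Fin k → (Fin n →₀ ℕ) → ℂ) : Function.Injective (paramPoint A a c) := by
  intro p q h
  ext i
  · simpa [paramPoint] using congrFun h (Sum.inr i)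
  · simpa [paramPoint] using congrFun h (Sum.inl ⟨i, a i⟩)

/-- for fixed positive `n, k` and finite nonempty supports `A_1,…,A_k`,
there is a nonzero polynomial `G` in the coefficients and the data such that whenever
`G(c,u) ≠ 0`, the ML system of the sparse system `F` with data `u` has finitely many
solutions, all of which lie in `(ℂ*)^n × (ℂ*)^k`. -/
theorem statement0 (n k : ℕ) (hn : 0 < n) (hk : 0 < k)
    (A : Fin k → Finset (Fin n →₀ ℕ)) (hA : ∀ j, (A j).Nonempty) :
    ∃ G : MvPolynomial ((Fin k × (Fin n →₀ ℕ)) ⊕ Fin n) ℂ, G ≠ 0 ∧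
      ∀ (c : Fin k → (Fin n →₀ ℕ) → ℂ) (u : Fin n → ℂ),
        eval (Sum.elim (fun p : Fin k × (Fin n →₀ ℕ) => c p.1 p.2) u) G ≠ 0 →
          (mlSol n k (fun j => sparsePoly n (A j) (c j)) u).Finite ∧
          ∀ p ∈ mlSol n k (fun j => sparsePoly n (A j) (c j)) u,
            (∀ i, p.1 i ≠ 0) ∧ (∀ j, p.2 j ≠ 0) := by
  classical
  let a : ∀ j, {α // α ∈ A j} := fun j => ⟨(hA j).choose, (hA j).choose_spec⟩
  obtain ⟨G, hG0, hG⟩ := exists_generic_fiber (paramMap A a)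
  -- `CoeffIdx A` is finite, whereas the coefficients in the statement are indexed by all pairs
  -- `(j, α)`.
  -- `CoeffIdx A` is finite, whereas the coefficients in the statement are indexed by all pairs
  -- `(j, α)`.
  let e : CoeffIdx A ⊕ Fin n → (Fin k × (Fin n →₀ ℕ)) ⊕ Fin n :=
    Sum.map (fun q => (q.1, q.2.1)) id
  have he : Function.Injective e := by
    refine Sum.map_injective.mpr ⟨?_, Function.injective_id⟩
    rintro ⟨j, α⟩ ⟨j', β⟩ h
    obtain ⟨h1, h2⟩ := Prod.mk.inj h
    dsimp only at h1 h2
    subst h1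
    rw [Subtype.ext h2]
  refine ⟨rename e G * ∏ i, X (Sum.inr i), mul_ne_zero ?_ ?_, fun c u hcu => ?_⟩
  · exact fun h => hG0 (rename_injective e he (by rw [h, map_zero]))
  · exact Finset.prod_ne_zero_iff.mpr fun i _ => X_ne_zero _
  rw [map_mul, eval_rename, map_prod] at hcu
  obtain ⟨hy, hu⟩ := mul_ne_zero_iff.mp hcu
  simp only [eval_X, Sum.elim_inr, Finset.prod_ne_zero_iff, Finset.mem_univ, true_imp_iff] at hu
  have hcomp : Sum.elim (fun p : Fin k × (Fin n →₀ ℕ) => c p.1 p.2) u ∘ e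
      = Sum.elim (fun q : CoeffIdx A => c q.1 q.2) u := by
    funext b; rcases b with q | i <;> rfl
  rw [hcomp] at hy
  obtain ⟨hfin, hne⟩ := hG _ hy
  -- At `x_i = 0` the equation `ℓ_i = 0` would read `u_i = 0`.
  -- At `x_i = 0` the equation `ℓ_i = 0` would read `u_i = 0`.
  have hx : ∀ p ∈ mlSol n k (fun j => sparsePoly n (A j) (c j)) u, ∀ i, p.1 i ≠ 0 :=
    fun p hp i h0 => hu i (by rw [← ((mem_mlSol_iff A c u p).mp hp).1 i, h0, zero_mul])
  have hmap := fun p hp => eval_paramMap A a c u p hp (hx p hp)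
  refine ⟨(hfin.preimage (paramPoint_injective A a c).injOn).subset hmap, fun p hp =>
    ⟨hx p hp, fun j => ?_⟩⟩
  simpa [paramPoint] using hne _ (hmap p hp) (Sum.inl ⟨j, a j⟩)
end

section
/- Let f_1,…,f_k ∈ ℂ[x_1,…,x_n] be nonzero polynomials each divisible by the monomial x_1⋯x_n, let u ∈ ℂ^n with u_i ≠ 0 for all i, and let ℓ_i := u_i − x_i·Σ_{j=1}^k λ_j·(∂f_j/∂x_i) ∈ ℂ[x_1,…,x_n,λ_1,…,λ_k]. Then for every i ∈ [n], Newt(ℓ_i) = conv({0} ∪ Newt(λ_1 f_1) ∪ … ∪ Newt(λ_k f_k)) as polytopes in ℝ^{n+k}; in particular Newt(ℓ_1) = Newt(ℓ_2) = … = Newt(ℓ_n). -/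
open MvPolynomial

/-!
The operator `x_i ∂/∂x_i` multiplies the coefficient of `x^d` by `d_i`. Every exponent of a
polynomial divisible by `x_1⋯x_n` has `d_i ≥ 1`, so in characteristic zero `x_i ∂f_j/∂x_i` has
exactly the same support as `f_j` (`support_X_mul_pderiv`).

The monomials of `λ_j x_i ∂f_j/∂x_i` have degree one in `λ_j` and degree zero in the other `λ`s,
so for distinct `j` these supports are disjoint and none contains the exponent `0` of the nonzero
constant `u_i`. Nothing cancels: the support of `ℓ_i` is exactly the union of `{0}` and the
supports of the `λ_j f_j` (`support_mlEll`). Taking convex hulls gives the claim, since replacing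
the pieces of a union by their convex hulls does not change the hull of the union.
-/

lemma coeff_X_mul_pderiv {σ : Type*} (i : σ) (p : MvPolynomial σ ℂ) (d : σ →₀ ℕ) :
    coeff d (X i * pderiv i p) = d i * coeff d p := by
  classical
  induction p using MvPolynomial.induction_on' with
  | add p q hp hq => simp only [map_add, mul_add, coeff_add, hp, hq]
  | monomial m a =>
    rw [X_mul_pderiv_monomial, coeff_smul, coeff_monomial]
    split_ifs with h
    · simp [h]
    · simp

lemma ne_zero_of_mem_support {σ : Type*} {i : σ} {p : MvPolynomial σ ℂ} (h : X i ∣ p)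
    {d : σ →₀ ℕ} (hd : d ∈ p.support) : d i ≠ 0 := by
  obtain ⟨q, rfl⟩ := h
  rw [support_X_mul, Finset.mem_map] at hd
  obtain ⟨e, -, rfl⟩ := hd
  simp

lemma support_X_mul_pderiv {σ : Type*} {i : σ} {p : MvPolynomial σ ℂ} (h : X i ∣ p) :
    (X i * pderiv i p).support = p.support := by
  ext d
  have := ne_zero_of_mem_support (d := d) h
  simp only [mem_support_iff, coeff_X_mul_pderiv] at this ⊢
  simpa using this

/-- The support of `λ_j g` depends only on the support of `g`. -/
lemma support_lambda_congr {n k : ℕ} (j : Fin k) {g g' : MvPolynomial (Fin n) ℂ}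
    (h : g.support = g'.support) :
    (X (Sum.inr j) * rename Sum.inl g : MvPolynomial (Fin n ⊕ Fin k) ℂ).support =
      (X (Sum.inr j) * rename Sum.inl g').support := by
  classical
  rw [support_X_mul, support_X_mul, support_rename_of_injective Sum.inl_injective,
    support_rename_of_injective Sum.inl_injective, h]

/-- Every monomial of `λ_j g` is linear in `λ_j` and free of the other `λ`s. -/
lemma lambda_exponent {n k : ℕ} {j : Fin k} {g : MvPolynomial (Fin n) ℂ}
    {d : Fin n ⊕ Fin k →₀ ℕ}
    (hd : d ∈ (X (Sum.inr j) * rename Sum.inl g : MvPolynomial (Fin n ⊕ Fin k) ℂ).support)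
    (j' : Fin k) : d (Sum.inr j') = if j = j' then 1 else 0 := by
  classical
  rw [support_X_mul, support_rename_of_injective Sum.inl_injective, Finset.mem_map] at hd
  obtain ⟨e, he, rfl⟩ := hd
  obtain ⟨c, -, rfl⟩ := Finset.mem_image.1 he
  have hc : Finsupp.mapDomain (Sum.inl : Fin n → Fin n ⊕ Fin k) c (Sum.inr j') = 0 :=
    Finsupp.mapDomain_of_notMem_range _ _ (by simp)
  simp [hc, Finsupp.single_apply]

/-- No terms cancel in `ℓ_i`. -/
lemma support_mlEll {n k : ℕ} {f : Fin k → MvPolynomial (Fin n) ℂ} {u : Fin n → ℂ}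
    (i : Fin n) (hdvd : ∀ j, X i ∣ f j) (hu : u i ≠ 0) :
    ((mlEll n k f u i).support : Set (Fin n ⊕ Fin k →₀ ℕ)) =
      {0} ∪ ⋃ j : Fin k,
        ((X (Sum.inr j) * rename Sum.inl (f j) : MvPolynomial (Fin n ⊕ Fin k) ℂ).support :
          Set (Fin n ⊕ Fin k →₀ ℕ)) := by
  classical
  set Q : Fin k → MvPolynomial (Fin n ⊕ Fin k) ℂ :=
    fun j => X (Sum.inr j) * rename Sum.inl (X i * pderiv i (f j)) with hQ
  have hell : mlEll n k f u i = C (u i) - ∑ j, Q j := by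
    rw [mlEll, Finset.mul_sum]
    congr 1
    refine Finset.sum_congr rfl fun j _ => ?_
    simp only [hQ, map_mul, rename_X]
    ring
  have hsupp (j : Fin k) : (X (Sum.inr j) * rename Sum.inl (f j) :
      MvPolynomial (Fin n ⊕ Fin k) ℂ).support = (Q j).support :=
    support_lambda_congr j (support_X_mul_pderiv (hdvd j)).symm
  simp only [hsupp]
  ext d
  simp only [Finset.mem_coe, Set.mem_union, Set.mem_singleton_iff, Set.mem_iUnion]
  rw [mem_support_iff, hell, coeff_sub, coeff_C, coeff_sum]
  by_cases hd : ∃ j, d ∈ (Q j).support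
  · obtain ⟨j, hj⟩ := hd
    have hne : (0 : Fin n ⊕ Fin k →₀ ℕ) ≠ d := by
      rintro rfl
      simpa using lambda_exponent hj j
    have hsum : ∑ j', coeff d (Q j') = coeff d (Q j) := by
      refine Finset.sum_eq_single j (fun j' _ hjj' => ?_) (by simp)
      by_contra h
      have h1 := lambda_exponent (mem_support_iff.2 h) j
      have h2 := lambda_exponent hj j
      simp [h2, hjj'] at h1
    rw [hsum, if_neg hne, zero_sub, neg_ne_zero]
    exact ⟨fun h => .inr ⟨j, mem_support_iff.2 h⟩, fun _ => mem_support_iff.1 hj⟩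
  · have hsum : ∑ j', coeff d (Q j') = 0 :=
      Finset.sum_eq_zero fun j' _ => notMem_support_iff.1 fun h => hd ⟨j', h⟩
    simp only [hsum, hd, or_false, sub_zero]
    split_ifs with h
    · simp [← h, hu]
    · simpa using fun h' => h h'.symm

/-- if each `f_j` is nonzero and divisible by `x_1⋯x_n` and all `u_i ≠ 0`,
then for every `i`, `Newt(ℓ_i) = conv({0} ∪ Newt(λ_1 f_1) ∪ … ∪ Newt(λ_k f_k))`
in `ℝ^{n+k}`; in particular all `Newt(ℓ_i)` coincide. -/
theorem statement3 (n k : ℕ) (f : Fin k → MvPolynomial (Fin n) ℂ) (u : Fin n → ℂ)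
    (hf : ∀ j, f j ≠ 0) (hdvd : ∀ j, (∏ i : Fin n, X i) ∣ f j) (hu : ∀ i, u i ≠ 0) :
    (∀ i : Fin n, newt (mlEll n k f u i) =
      convexHull ℝ ({(0 : Fin n ⊕ Fin k → ℝ)} ∪
        ⋃ j : Fin k, newt (X (Sum.inr j) * rename Sum.inl (f j)))) ∧
    ∀ i i' : Fin n, newt (mlEll n k f u i) = newt (mlEll n k f u i') := by
  have key : ∀ i : Fin n, newt (mlEll n k f u i) =
      convexHull ℝ ({(0 : Fin n ⊕ Fin k → ℝ)} ∪
        ⋃ j : Fin k, newt (X (Sum.inr j) * rename Sum.inl (f j))) := by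
    intro i
    have hX (j : Fin k) : X i ∣ f j :=
      (Finset.dvd_prod_of_mem (fun i : Fin n => (X i : MvPolynomial (Fin n) ℂ))
        (Finset.mem_univ i)).trans (hdvd j)
    rw [newt, support_mlEll i hX (hu i), Set.image_union, Set.image_singleton, Set.image_iUnion]
    have h0 : (fun t => (((0 : Fin n ⊕ Fin k →₀ ℕ) t : ℕ) : ℝ)) =
        (0 : Fin n ⊕ Fin k → ℝ) := by
      ext t
      simp
    rw [h0]
    apply subset_antisymm
    · exact convexHull_mono (Set.union_subset_union_right _
        (Set.iUnion_mono fun j => subset_convexHull ℝ _))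
    · refine convexHull_min (Set.union_subset ?_ (Set.iUnion_subset fun j => ?_))
        (convex_convexHull ℝ _)
      · exact Set.subset_union_left.trans (subset_convexHull ℝ _)
      · exact convexHull_mono fun x hx => Or.inr (Set.mem_iUnion.2 ⟨j, hx⟩)
  exact ⟨key, fun i i' => (key i).trans (key i').symm⟩
end

section
/- Let f_1,…,f_k ∈ ℂ[x_1,…,x_n] be nonzero polynomials each divisible by x_1⋯x_n and let u ∈ ℂ^n with u_i ≠ 0 for all i. If a nonzero vector w = (a,b) ∈ ℤ^n × ℤ^k satisfies b_j + val_a(Newt(f_j)) > 0 for every j ∈ [k], then init_w(ℓ_i) = u_i (a nonzero constant) for every i ∈ [n]; consequently the initial system init_w(L(F)) = (init_w(ℓ_1),…,init_w(ℓ_n), init_w(f_1),…,init_w(f_k)) has no solutions in (ℂ*)^{n+k}. -/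
/-!
Multiplying `∂f_j/∂x_i` by `x_i` merely rescales the terms of `f_j` (possibly
by zero), so every exponent of
`x_i · Σ_j λ_j ∂f_j/∂x_i` has the form `(d, e_j)` with `d ∈ supp f_j`. Its weight
`b_j + ⟨a, d⟩` is at least `b_j + val_a(Newt(f_j)) > 0`, by `valOf_newt_le`. Hence the constant
term `u_i` of `ℓ_i`, of weight `0`, is the unique term of least weight, and
`init_w(ℓ_i) = u_i ≠ 0` has no zeros. When `n = 0` there are no `ℓ_i`; then `w ≠ 0` forces
`k > 0`, and the initial form of the nonzero constant `f_j` has no zeros.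
-/

open MvPolynomial

/-- The weight of an exponent in the support is bounded below by `val_w` of the Newton polytope;
compactness of the polytope ensures that the infimum defining `val_w` is a genuine one. -/
theorem valOf_newt_le {σ : Type*} [Fintype σ] (w : σ → ℤ) (f : MvPolynomial σ ℂ)
    {d : σ →₀ ℕ} (hd : d ∈ f.support) :
    valOf w (newt f) ≤ ((∑ i, w i * (d i : ℤ) : ℤ) : ℝ) := by
  have hcpt : IsCompact (newt f) :=
    (f.support.finite_toSet.image _).isCompact_convexHull ℝ
  have hcont : Continuous (wdot w) := by
    unfold wdot
    fun_prop
  have hmem : (fun i => ((d i : ℕ) : ℝ)) ∈ newt f :=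
    subset_convexHull ℝ _ ⟨d, hd, rfl⟩
  have h := csInf_le (hcpt.image hcont).bddBelow (Set.mem_image_of_mem (wdot w) hmem)
  simpa [wdot, valOf] using h

/-- A nonzero constant is the initial form of its difference with a polynomial all of whose
exponents have positive weight. -/
theorem initw_C_sub {σ : Type*} [Fintype σ] (w : σ → ℤ) (g : MvPolynomial σ ℂ) {c : ℂ}
    (hc : c ≠ 0) (hg : ∀ d ∈ g.support, 0 < ∑ i, w i * (d i : ℤ)) :
    initw w (C c - g) = C c := by
  classical
  have hg0 : coeff 0 g = 0 := by
    by_contra h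
    have := hg 0 (mem_support_iff.2 h)
    simp at this
  have h0 : coeff 0 (C c - g) = c := by simp [hg0]
  have hpos : ∀ d ∈ (C c - g).support, d ≠ 0 → 0 < ∑ i, w i * (d i : ℤ) := by
    intro d hd hne
    refine hg d (mem_support_iff.2 fun h => ?_)
    rw [mem_support_iff, coeff_sub, coeff_C, if_neg (Ne.symm hne), h] at hd
    simp at hd
  have h0mem : (0 : σ →₀ ℕ) ∈ (C c - g).support := by
    rw [mem_support_iff, h0]
    exact hc
  have hfilter : (C c - g).support.filter
      (fun d : σ →₀ ℕ => ∀ d' ∈ (C c - g).support, ∑ i, w i * (d i : ℤ) ≤ ∑ i, w i * (d' i : ℤ))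
      = {0} := by
    ext d
    rw [Finset.mem_filter, Finset.mem_singleton]
    constructor
    · rintro ⟨hd, hmin⟩
      by_contra hne
      have h1 := hmin 0 h0mem
      have h2 := hpos d hd hne
      simp at h1
      omega
    · rintro rfl
      refine ⟨h0mem, fun d' hd' => ?_⟩
      by_cases hne : d' = 0
      · rw [hne]
      · simpa using (hpos d' hd' hne).le
  unfold initw
  rw [hfilter, Finset.sum_singleton, h0, C_apply]

/-- The Euler operator `x_i ∂/∂x_i` rescales each term, possibly by zero,
so it creates no new exponents. -/
theorem support_X_mul_pderiv_subset {σ : Type*} (i : σ) (f : MvPolynomial σ ℂ) :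
    (X i * pderiv i f).support ⊆ f.support := by
  classical
  intro d hd
  rw [f.as_sum, map_sum, Finset.mul_sum] at hd
  obtain ⟨e, he, hde⟩ := Finset.mem_biUnion.1 (support_sum hd)
  rw [X_mul_pderiv_monomial] at hde
  have h := support_monomial_subset (support_smul hde)
  rw [Finset.mem_singleton] at h
  exact h ▸ he

/-- Every exponent of `x_i · Σ_j λ_j ∂f_j/∂x_i` has positive weight. The `λ_j`-part contributes
`b_j`, and the `x`-part is an exponent of `f_j`, of weight at least `val_a(Newt(f_j))`. -/
theorem weight_pos {n k : ℕ} (f : Fin k → MvPolynomial (Fin n) ℂ)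
    (a : Fin n → ℤ) (b : Fin k → ℤ)
    (hpos : ∀ j, 0 < (b j : ℝ) + valOf a (newt (f j))) (i : Fin n) :
    ∀ d ∈ (X (Sum.inl i) * ∑ j : Fin k, X (Sum.inr j) *
        rename Sum.inl (pderiv i (f j)) : MvPolynomial (Fin n ⊕ Fin k) ℂ).support,
      0 < ∑ s, Sum.elim a b s * (d s : ℤ) := by
  classical
  intro d hd
  have hrw : (X (Sum.inl i) * ∑ j : Fin k, X (Sum.inr j) *
        rename Sum.inl (pderiv i (f j)) : MvPolynomial (Fin n ⊕ Fin k) ℂ)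
      = ∑ j : Fin k, X (Sum.inr j) * rename Sum.inl (X i * pderiv i (f j)) := by
    rw [Finset.mul_sum]
    refine Finset.sum_congr rfl fun j _ => ?_
    rw [map_mul, rename_X]
    ring
  rw [hrw] at hd
  obtain ⟨j, -, hj⟩ := Finset.mem_biUnion.1 (support_sum hd)
  rw [support_X_mul, support_rename_of_injective Sum.inl_injective] at hj
  obtain ⟨e, he, rfl⟩ := Finset.mem_map.1 hj
  obtain ⟨m, hm, rfl⟩ := Finset.mem_image.1 he
  have hle := valOf_newt_le a (f j) (support_X_mul_pderiv_subset i (f j) hm)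
  have hwt : 0 < b j + ∑ s, a s * (m s : ℤ) := by
    have : (0 : ℝ) < ((b j + ∑ s, a s * (m s : ℤ) : ℤ) : ℝ) := by
      rw [Int.cast_add]
      linarith [hpos j]
    exact_mod_cast this
  have hinl : ∀ s : Fin n, Finsupp.mapDomain (Sum.inl : Fin n → Fin n ⊕ Fin k) m (Sum.inl s)
      = m s := fun s => Finsupp.mapDomain_apply Sum.inl_injective m s
  have hinr : ∀ s : Fin k, Finsupp.mapDomain (Sum.inl : Fin n → Fin n ⊕ Fin k) m (Sum.inr s)
      = 0 := fun s => Finsupp.mapDomain_of_notMem_range m _ (by simp)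
  have hsum : ∑ s : Fin k, b s * ((Finsupp.single (Sum.inr j : Fin n ⊕ Fin k) 1 (Sum.inr s) : ℕ) : ℤ)
      = b j := by
    simp [Finsupp.single_apply]
  simp [Fintype.sum_sum_type, hinl, hinr, hsum]
  omega

/-- with each `f_j` nonzero and divisible by `x_1⋯x_n` and all `u_i ≠ 0`,
if a nonzero `w = (a,b)` satisfies `b_j + val_a(Newt(f_j)) > 0` for all `j`, then
`init_w(ℓ_i) = u_i` for every `i`, and the initial system of `L(F)` has no solutions
in `(ℂ*)^{n+k}`. -/
theorem statement8 (n k : ℕ)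
    (f : Fin k → MvPolynomial (Fin n) ℂ) (u : Fin n → ℂ)
    (hf : ∀ j, f j ≠ 0) (hdvd : ∀ j, (∏ i : Fin n, X i) ∣ f j) (hu : ∀ i, u i ≠ 0)
    (a : Fin n → ℤ) (b : Fin k → ℤ) (hw : Sum.elim a b ≠ 0)
    (hpos : ∀ j, 0 < (b j : ℝ) + valOf a (newt (f j))) :
    (∀ i, initw (Sum.elim a b) (mlEll n k f u i) = C (u i)) ∧
    ¬ ∃ p : Fin n ⊕ Fin k → ℂ, (∀ i, p i ≠ 0) ∧
        (∀ i, eval p (initw (Sum.elim a b) (mlEll n k f u i)) = 0) ∧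
        (∀ j, eval p (initw (Sum.elim a b) (rename Sum.inl (f j))) = 0) := by
  have hinit : ∀ i, initw (Sum.elim a b) (mlEll n k f u i) = C (u i) := fun i =>
    initw_C_sub _ _ (hu i) (weight_pos f a b hpos i)
  refine ⟨hinit, ?_⟩
  rintro ⟨p, -, hℓ, hfp⟩
  rcases n with _ | n
  · rcases k with _ | k
    · exact hw (funext fun s => s.elim Fin.elim0 Fin.elim0)
    · have hconst := eq_C_of_isEmpty (f 0)
      have hc : coeff 0 (f 0) ≠ 0 := fun h => hf 0 (by rw [hconst, h, C_0])
      have h := hfp 0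
      have hi := initw_C_sub (Sum.elim a b) 0 hc (by simp)
      rw [sub_zero] at hi
      rw [hconst, rename_C, hi, eval_C] at h
      exact hc h
  · have h := hℓ 0
    rw [hinit, eval_C] at h
    exact hu 0 h
end

section
/- Fix finite nonempty supports A_1,…,A_k ⊆ ℕ^n such that every α ∈ A_j has all coordinates ≥ 1 (so x_1⋯x_n divides each f_j). There exists a nonzero polynomial G in the coefficients c = (c_{j,α}) and the data u such that whenever G(c,u) ≠ 0, for every nonzero w = (a,b) ∈ ℤ^n × ℤ^k with min_{j∈[k]} (b_j + val_a(Newt(f_j))) < 0, the initial system init_w(L(F)) = (init_w(ℓ_1),…,init_w(ℓ_n), init_w(f_1),…,init_w(f_k)) has no solutions in (ℂ*)^{n+k}. -/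
/-!
If the minimal weight `μ` of the monomials `λ_j x^α` is negative, the constant `u_i` never enters
`init_w(ℓ_i)`. Because all exponents are at least `1`, the same set `U` of pairs `(j, α)` carries
the initial form of every `ℓ_i` and, for the `j` occurring in `U`, of `f_j` (`eval_initw_sum`,
`mlEll_sparse`). Let `m_q = (α, e_j)` be the exponent vectors of `U` (the Cayley configuration).
A torus solution `p = (x, λ)` of the initial system then implies that the vector
`z_q = c_q p^{m_q}`, `q ∈ U`, which has no zero entry, lies in the kernel `∑ z_q m_q = 0`.
There are finitely many `U`, so it suffices to find, for each of them, a nonzero polynomial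
vanishing at all such `c`, that is, to show that the discriminant locus of `U` lies in a
hypersurface (`exists_discriminant`).

This is a dimension count. Choose a subset `R` of the configuration that is a basis of its rational
span. Each `s ∉ R` gives an integer relation `v_s` of the `m_q` (`exists_basis_relations`), and
`c^{v_s} = z^{v_s}` since monomials in `p` cancel (`prod_zpow_mul_of_kernel`). A kernel vector is
determined by its coordinates outside `R`, and `z^{v_s}` is invariant under scaling because
`∑_j (m_q)_j = 1`; hence the `|Rᶜ|` quantities `c^{v_s}` are rational functions of `|Rᶜ| - 1`
parameters, and satisfy an algebraic relation `P` (`exists_relation`). Clearing denominators in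
`P(c^{v_s})` gives the polynomial (`laurent_clear`). It is nonzero because the `c^{v_s}` take
arbitrary nonzero values: set `c = 1` on `R` and take roots outside `R`.
-/

open MvPolynomial

/-! ### Algebraic relations between rational functions -/

/-- More rational functions than variables are algebraically dependent. -/
theorem exists_relation {T S : Type} [Fintype T] [Fintype S] (h : Fintype.card T < Fintype.card S)
    (f : S → FractionRing (MvPolynomial T ℂ)) :
    ∃ P : MvPolynomial S ℂ, P ≠ 0 ∧ aeval f P = 0 := by
  by_contra! hP
  have hind : AlgebraicIndependent ℂ f := by
    rw [algebraicIndependent_iff]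
    intro p hp
    by_contra h0
    exact hP p h0 hp
  have h1 := hind.cardinalMk_le_trdeg
  have h2 := trdeg_add_eq ℂ (MvPolynomial T ℂ) (A := FractionRing (MvPolynomial T ℂ))
  have : Algebra.IsAlgebraic (MvPolynomial T ℂ) (FractionRing (MvPolynomial T ℂ)) :=
    IsLocalization.isAlgebraic _ (nonZeroDivisors (MvPolynomial T ℂ))
  rw [trdeg_eq_zero_iff.2 this, add_zero, MvPolynomial.trdeg_of_isDomain] at h2
  rw [← h2] at h1
  simp at h1
  omega

/-- Clearing denominators in `P(c^{v_s} : s)`, uniformly over all field extensions of `ℂ`. -/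
theorem laurent_clear {S I : Type} [Fintype I] (v : S → I → ℤ) (P : MvPolynomial S ℂ) :
    ∃ (G : MvPolynomial I ℂ) (N : ℕ), ∀ (K : Type) [Field K] [Algebra ℂ K] (c : I → K),
      (∀ i, c i ≠ 0) →
        aeval c G = (∏ i, c i) ^ N * aeval (fun s => ∏ i, c i ^ v s i) P := by
  induction P using MvPolynomial.induction_on with
  | C a => exact ⟨C a, 0, fun K _ _ c hc => by simp⟩
  | add P Q hP hQ =>
    obtain ⟨G, N, hG⟩ := hP
    obtain ⟨H, M, hH⟩ := hQ
    refine ⟨G * (∏ i, X i) ^ M + H * (∏ i, X i) ^ N, N + M, fun K _ _ c hc => ?_⟩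
    simp only [map_add, map_mul, map_pow, map_prod, aeval_X, hG K c hc, hH K c hc]
    ring
  | mul_X P s hP =>
    obtain ⟨G, N, hG⟩ := hP
    -- a common power `M` of all variables turns the exponents `v s` into natural numbers
    set M : ℕ := ∑ i, (v s i).natAbs with hM
    have hMi : ∀ i, 0 ≤ v s i + M := by
      intro i
      have : (v s i).natAbs ≤ M :=
        Finset.single_le_sum (f := fun i => (v s i).natAbs) (fun _ _ => Nat.zero_le _)
          (Finset.mem_univ i)
      omega
    refine ⟨G * ∏ i, X i ^ (v s i + M).toNat, N + M, fun K _ _ c hc => ?_⟩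
    simp only [map_mul, map_pow, map_prod, aeval_X, hG K c hc]
    have : ∏ i, c i ^ (v s i + M).toNat = (∏ i, c i) ^ M * ∏ i, c i ^ v s i := by
      rw [← Finset.prod_pow, ← Finset.prod_mul_distrib]
      refine Finset.prod_congr rfl fun i _ => ?_
      rw [← zpow_natCast, Int.toNat_of_nonneg (hMi i), zpow_add₀ (hc i), zpow_natCast, mul_comm]
    rw [this]
    ring

/-! ### Integer relations of a vector configuration -/

/-- A subset `R` of an integer vector configuration that is a basis of the rational span, with the
coordinates `p i r / D` of every vector in that basis. The functionals `φ r / D` compute these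
coordinates; being given by vectors, they also make sense over `ℂ`. -/
theorem exists_basis_relations {I κ : Type} [Fintype I] [Fintype κ] (m : I → κ → ℤ) :
    ∃ (R : Finset I) (D : ℕ) (p : I → I → ℤ) (φ : I → κ → ℚ), 0 < D ∧
      (∀ i l, (D : ℤ) * m i l = ∑ r ∈ R, p i r * m r l) ∧
      (∀ r ∈ R, ∀ i ∈ R, i ≠ r → p i r = 0) ∧ (∀ r ∈ R, p r r = D) ∧
      (∀ i, ∀ r ∈ R, (p i r : ℚ) = ∑ l, φ r l * m i l) := by
  classical
  let mq : I → κ → ℚ := fun i l => m i l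
  obtain ⟨b, -, -, hspan, hli⟩ :=
    exists_linearIndepOn_extension (K := ℚ) (v := mq) (linearIndepOn_empty ℚ mq)
      (Set.empty_subset Set.univ)
  let R : Finset I := b.toFinite.toFinset
  have hR : ∀ i, i ∈ R ↔ i ∈ b := by simp [R]
  -- the coordinate functionals of the basis `b`
  have hdual : ∀ r : I, ∃ ψ : (κ → ℚ) →ₗ[ℚ] ℚ, r ∈ b → ∀ i ∈ b, ψ (mq i) = if i = r then 1 else 0 := by
    intro r
    by_cases hr : r ∈ b
    · have hinj := hli
      obtain ⟨g, hg⟩ := LinearMap.exists_leftInverse_of_injective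
        (Finsupp.linearCombination ℚ fun x : b => mq x) (by
          rw [LinearMap.ker_eq_bot]; exact hli)
      refine ⟨(Finsupp.lapply ⟨r, hr⟩) ∘ₗ g, fun _ i hi => ?_⟩
      have := LinearMap.congr_fun hg (Finsupp.single ⟨i, hi⟩ 1)
      simp only [LinearMap.comp_apply, Finsupp.linearCombination_single, one_smul,
        LinearMap.id_apply] at this
      simp [this, Finsupp.single_apply]
    · exact ⟨0, fun h => absurd h hr⟩
  choose ψ hψ using hdual
  have hexp : ∀ x ∈ Submodule.span ℚ (mq '' b), x = ∑ r ∈ R, ψ r x • mq r := by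
    intro x hx
    induction hx using Submodule.span_induction with
    | mem x h =>
      obtain ⟨i, hi, rfl⟩ := h
      rw [Finset.sum_eq_single_of_mem i ((hR i).2 hi)]
      · simp [hψ i hi i hi]
      · intro r hr hne
        simp [hψ r ((hR r).1 hr) i hi, hne.symm]
    | zero => simp
    | add x y _ _ hx hy =>
      simp only [map_add, add_smul, Finset.sum_add_distrib]
      rw [← hx, ← hy]
    | smul a x _ hx =>
      simp only [map_smul, smul_eq_mul, mul_smul]
      rw [← Finset.smul_sum, ← hx]
  obtain ⟨⟨D, hD⟩, hDint⟩ := IsLocalization.exist_integer_multiples_of_finite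
    (nonZeroDivisors ℤ) (fun x : I × I => ψ x.2 (mq x.1))
  have hD0 : D ≠ 0 := nonZeroDivisors.ne_zero hD
  have hz_ints : ∀ i r, ∃ z : ℤ, (z : ℚ) = (D.natAbs : ℚ) * ψ r (mq i) := by
    intro i r
    obtain ⟨z, hz⟩ := hDint (i, r)
    simp only [zsmul_eq_mul, eq_intCast, algebraMap_int_eq] at hz
    rcases Int.natAbs_eq D with h | h
    · refine ⟨z, ?_⟩
      rw [hz]
      have : (D : ℚ) = (D.natAbs : ℚ) := by
        rw [← Int.cast_natCast]; exact congrArg _ h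
      rw [← this]
    · refine ⟨-z, ?_⟩
      push_cast
      rw [hz]
      have : (D : ℚ) = -(D.natAbs : ℚ) := by
        rw [← Int.cast_natCast, ← Int.cast_neg]; exact congrArg _ h
      rw [this]; ring
  choose p hp using hz_ints
  refine ⟨R, D.natAbs, p, fun r l => (D.natAbs : ℚ) * ψ r (Pi.single l 1), Int.natAbs_pos.2 hD0,
    ?_, ?_, ?_, ?_⟩
  · intro i l
    have h1 := congrFun (hexp (mq i) (hspan ⟨i, trivial, rfl⟩)) l
    have h2 : ((D.natAbs : ℤ) : ℚ) * (m i l : ℚ) = ∑ r ∈ R, (p i r : ℚ) * (m r l : ℚ) := by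
      have : (m i l : ℚ) = mq i l := rfl
      rw [this, h1]
      simp only [Finset.sum_apply, Pi.smul_apply, smul_eq_mul, Finset.mul_sum, hp]
      refine Finset.sum_congr rfl fun r _ => ?_
      simp only [mq, Int.cast_natCast]; ring
    exact_mod_cast h2
  · intro r hr i hi hne
    have := hp i r
    rw [hψ r ((hR r).1 hr) i ((hR i).1 hi), if_neg hne] at this
    simpa using this
  · intro r hr
    have := hp r r
    rw [hψ r ((hR r).1 hr) r ((hR r).1 hr), if_pos rfl, mul_one] at this
    rw [← Int.cast_natCast] at this
    exact Int.cast_injective this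
  · intro i r hr
    rw [hp]
    have : mq i = ∑ l, mq i l • (Pi.single l (1 : ℚ) : κ → ℚ) := by
      ext l; simp [Finset.sum_apply, Pi.single_apply]
    conv_lhs => rw [this, map_sum]
    rw [Finset.mul_sum]
    refine Finset.sum_congr rfl fun l _ => ?_
    simp only [map_smul, smul_eq_mul, mq]; ring

/-! ### The discriminant locus lies in a hypersurface -/

/-- A Laurent monomial whose exponent vector is a relation of the configuration `m` is invariant
under the torus action with characters `m i`. -/
theorem prod_zpow_mul_of_kernel {K : Type} [Field K] {I κ : Type} [Fintype I] [Fintype κ]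
    (m : I → κ → ℤ) (v : I → ℤ) (hv : ∀ l, ∑ i, v i * m i l = 0) (c : I → K) (s : κ → K)
    (hs : ∀ l, s l ≠ 0) :
    ∏ i, (c i * ∏ l, s l ^ m i l) ^ v i = ∏ i, c i ^ v i := by
  have h1 : ∏ i, (∏ l, s l ^ m i l) ^ v i = 1 := by
    simp_rw [← Finset.prod_zpow, ← zpow_mul]
    rw [Finset.prod_comm]
    refine Finset.prod_eq_one fun l _ => ?_
    have : ∀ t : Finset I, ∏ i ∈ t, s l ^ (m i l * v i) = s l ^ (∑ i ∈ t, m i l * v i) := by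
      classical
      intro t
      induction t using Finset.induction_on with
      | empty => simp
      | insert a t ha ih => rw [Finset.prod_insert ha, Finset.sum_insert ha, zpow_add₀ (hs l), ih]
    rw [this]
    simp_rw [mul_comm (m _ l), hv l, zpow_zero]
  simp_rw [mul_zpow, Finset.prod_mul_distrib, h1, mul_one]

/-- For a vector configuration `m` on an affine hyperplane `h = 1`, the coefficient vectors `c` in
the torus for which some `(c_i s^{m_i})_i` lies in the kernel of `m` are among the zeros of a
nonzero polynomial. -/
theorem exists_discriminant {I κ : Type} [Fintype I] [Nonempty I] [Fintype κ] (m : I → κ → ℤ)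
    (h : κ → ℤ) (hm : ∀ i, ∑ l, h l * m i l = 1) :
    ∃ G : MvPolynomial I ℂ, G ≠ 0 ∧ ∀ (c : I → ℂ) (s : κ → ℂ), (∀ i, c i ≠ 0) → (∀ l, s l ≠ 0) →
      (∀ l, ∑ i, c i * (∏ l', s l' ^ m i l') * (m i l : ℂ) = 0) → eval c G = 0 := by
  classical
  by_cases hbad : ∃ (c : I → ℂ) (s : κ → ℂ), (∀ i, c i ≠ 0) ∧ (∀ l, s l ≠ 0) ∧
      (∀ l, ∑ i, c i * (∏ l', s l' ^ m i l') * (m i l : ℂ) = 0)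
  swap
  · refine ⟨1, one_ne_zero, fun c s hc hs he => absurd ⟨c, s, hc, hs, he⟩ hbad⟩
  obtain ⟨R, D, p, φ, hD, hrel, hp0, hpD, hφ⟩ := exists_basis_relations m
  have hDC : (D : ℂ) ≠ 0 := by exact_mod_cast hD.ne'
  -- a kernel vector is determined by its entries outside `R`
  have hker : ∀ (y : I → ℂ), (∀ l, ∑ i, y i * (m i l : ℂ) = 0) → ∀ r ∈ R,
      y r = -∑ i ∈ Rᶜ, (p i r : ℂ) / D * y i := by
    intro y hy r hr
    have hφC : ∀ i, (p i r : ℂ) = ∑ l, (φ r l : ℂ) * m i l := by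
      intro i
      have := congrArg (fun q : ℚ => (q : ℂ)) (hφ i r hr)
      push_cast at this
      exact this
    have h0 : ∑ i, (p i r : ℂ) * y i = 0 := by
      simp_rw [hφC, Finset.sum_mul]
      rw [Finset.sum_comm]
      refine Finset.sum_eq_zero fun l _ => ?_
      have : ∑ i, (φ r l : ℂ) * (m i l) * y i = φ r l * ∑ i, y i * (m i l : ℂ) := by
        rw [Finset.mul_sum]; exact Finset.sum_congr rfl fun i _ => by ring
      rw [this, hy l, mul_zero]
    rw [← Finset.sum_add_sum_compl R, Finset.sum_eq_single_of_mem r hr, hpD r hr] at h0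
    · have h1 : ∑ i ∈ Rᶜ, (p i r : ℂ) / D * y i = (∑ i ∈ Rᶜ, (p i r : ℂ) * y i) / D := by
        rw [Finset.sum_div]; exact Finset.sum_congr rfl fun i _ => by ring
      rw [h1]
      field_simp
      push_cast at h0
      linear_combination h0
    · intro i hi hne
      rw [hp0 r hr i hi hne]; simp
  obtain ⟨β, hβ⟩ : ∃ β, β ∉ R := by
    by_contra! hall
    obtain ⟨c, s, hc, hs, he⟩ := hbad
    obtain ⟨i⟩ := ‹Nonempty I›
    have hRu : Rᶜ = ∅ := by ext; simp [hall]
    have := hker _ he i (hall i)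
    rw [hRu, Finset.sum_empty, neg_zero] at this
    exact mul_ne_zero (hc i) (Finset.prod_ne_zero_iff.2 fun l _ => zpow_ne_zero _ (hs l)) this
  let S := {i : I // i ∉ R}
  let T := {i : S // i.1 ≠ β}
  -- coordinates outside `R`, normalised to be `1` at `β`; the value of `t` on `R` is irrelevant
  let t : I → MvPolynomial T ℂ := fun i =>
    if hi : i ∉ R ∧ i ≠ β then X ⟨⟨i, hi.1⟩, hi.2⟩ else 1
  -- the resulting parametrised kernel vector
  let y : I → MvPolynomial T ℂ := fun i =>
    if i ∈ R then -∑ j ∈ Rᶜ, C ((p j i : ℂ) / D) * t j else t i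
  -- a nowhere vanishing kernel vector is, up to scaling, a value of `y`
  have hyval : ∀ z : I → ℂ, (∀ i, z i ≠ 0) → (∀ l, ∑ i, z i * (m i l : ℂ) = 0) →
      ∀ i, eval (fun j : T => z j.1.1 / z β) (y i) = z i / z β := by
    intro z hz hzk
    have ht : ∀ i ∉ R, eval (fun j : T => z j.1.1 / z β) (t i) = z i / z β := by
      intro i hi
      by_cases hiβ : i = β
      · subst hiβ
        simp [t, hz i]
      · simp [t, hi, hiβ]
    intro i
    by_cases hi : i ∈ R
    · simp only [y, if_pos hi, map_neg, map_sum, map_mul, eval_C]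
      rw [hker z hzk i hi, neg_div, Finset.sum_div]
      congr 1
      refine Finset.sum_congr rfl fun j hj => ?_
      rw [ht j (by simpa using hj), mul_div_assoc]
    · simp only [y, if_neg hi, ht i hi]
  -- the integer relation of the configuration that expresses `D • m s` in the basis `R`
  let v : S → I → ℤ := fun s i => (if i = s.1 then (D : ℤ) else 0) - if i ∈ R then p s.1 i else 0
  have hvk : ∀ s l, ∑ i, v s i * m i l = 0 := by
    intro s l
    simp only [v, sub_mul, ite_mul, zero_mul, Finset.sum_sub_distrib, Finset.sum_ite_eq',
      Finset.mem_univ, if_true, Finset.sum_ite_mem, Finset.univ_inter]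
    rw [hrel]; simp
  have hv1 : ∀ s, ∑ i, v s i = 0 := by
    intro s
    have : ∀ i, v s i = ∑ l, h l * (v s i * m i l) := by
      intro i
      have : ∑ l, h l * (v s i * m i l) = v s i * ∑ l, h l * m i l := by
        rw [Finset.mul_sum]; exact Finset.sum_congr rfl fun l _ => by ring
      rw [this, hm, mul_one]
    rw [Finset.sum_congr rfl fun i _ => this i, Finset.sum_comm]
    simp_rw [← Finset.mul_sum, hvk, mul_zero, Finset.sum_const_zero]
  have hcard : Fintype.card T < Fintype.card S :=
    Fintype.card_subtype_lt (p := fun i : S => i.1 ≠ β) (x := ⟨β, hβ⟩) (by simp)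
  let F := FractionRing (MvPolynomial T ℂ)
  let yF : I → F := fun i => algebraMap _ F (y i)
  obtain ⟨P, hP0, hP⟩ := exists_relation hcard fun s => ∏ i, yF i ^ v s i
  obtain ⟨G, N, hG⟩ := laurent_clear v P
  have hy0 : ∀ i, y i ≠ 0 := by
    intro i hi
    obtain ⟨c, s, hc, hs, he⟩ := hbad
    have hz : ∀ i, c i * ∏ l', s l' ^ m i l' ≠ 0 := fun i =>
      mul_ne_zero (hc i) (Finset.prod_ne_zero_iff.2 fun l _ => zpow_ne_zero _ (hs l))
    have := hyval _ hz he i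
    rw [hi, map_zero] at this
    exact div_ne_zero (hz i) (hz β) this.symm
  have hyG : aeval y G = 0 := by
    have h1 := hG F yF fun i => by simpa [yF] using hy0 i
    rw [hP, mul_zero] at h1
    apply IsFractionRing.injective (MvPolynomial T ℂ) F
    rw [map_zero, ← h1]
    exact (aeval_algebraMap_apply F y G).symm
  refine ⟨G, ?_, ?_⟩
  · -- the Laurent monomials attain every value with nonzero entries
    have hPX : P * ∏ s : S, X s ≠ 0 :=
      mul_ne_zero hP0 (Finset.prod_ne_zero_iff.2 fun s _ => X_ne_zero s)
    obtain ⟨z, hz⟩ : ∃ z, eval z (P * ∏ s : S, X s) ≠ 0 := by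
      by_contra! hall
      exact hPX (MvPolynomial.funext fun z => by rw [hall z, map_zero])
    simp only [map_mul, map_prod, eval_X] at hz
    have hz1 := left_ne_zero_of_mul hz
    have hz2 : ∀ s, z s ≠ 0 := fun s => Finset.prod_ne_zero_iff.1 (right_ne_zero_of_mul hz) s
      (Finset.mem_univ _)
    choose w hw using fun s => IsAlgClosed.exists_pow_nat_eq (z s) hD
    have hw0 : ∀ s, w s ≠ 0 := fun s h0 => hz2 s (by rw [← hw, h0, zero_pow hD.ne'])
    let c : I → ℂ := fun i => if hi : i ∉ R then w ⟨i, hi⟩ else 1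
    have hc : ∀ i, c i ≠ 0 := by
      intro i
      by_cases hi : i ∈ R
      · simp [c, hi]
      · simpa [c, hi] using hw0 _
    have hcv : (fun s => ∏ i, c i ^ v s i) = z := by
      funext s
      rw [Finset.prod_eq_single_of_mem s.1 (Finset.mem_univ _)]
      · simp [c, v, s.2, hw]
      · intro i _ hi
        by_cases hiR : i ∈ R
        · simp [c, hiR]
        · simp [v, hiR, hi]
    intro hG0
    have h1 := hG ℂ c hc
    rw [hG0, map_zero, hcv, aeval_eq_eval] at h1
    exact mul_ne_zero (pow_ne_zero _ (Finset.prod_ne_zero_iff.2 fun i _ => hc i)) hz1 h1.symm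
  · intro c s hc hs he
    let z : I → ℂ := fun i => c i * ∏ l', s l' ^ m i l'
    have hz : ∀ i, z i ≠ 0 := fun i =>
      mul_ne_zero (hc i) (Finset.prod_ne_zero_iff.2 fun l _ => zpow_ne_zero _ (hs l))
    have hzβ : ∀ i, z i / z β ≠ 0 := fun i => div_ne_zero (hz i) (hz β)
    have h1 : eval (fun i => z i / z β) G = 0 := by
      have h2 := congrArg (eval fun j : T => z j.1.1 / z β) hyG
      rw [map_zero] at h2
      rw [← h2]
      have h3 : (fun i => z i / z β) = fun i => eval (fun j : T => z j.1.1 / z β) (y i) :=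
        funext fun i => (hyval z hz he i).symm
      rw [h3]
      have h4 := (comp_aeval_apply y (aeval fun j : T => z j.1.1 / z β) G)
      simp only [aeval_eq_eval] at h4
      exact h4.symm
    have h2 := hG ℂ _ hzβ
    have h3 := hG ℂ c hc
    rw [aeval_eq_eval] at h2 h3
    have hmon : (fun s => ∏ i, (z i / z β) ^ v s i) = fun s => ∏ i, c i ^ v s i := by
      funext a
      rw [← prod_zpow_mul_of_kernel m (v a) (hvk a) c s hs]
      have := prod_zpow_mul_of_kernel (fun (_ : I) (_ : Unit) => 1) (v a)
        (fun _ => by simpa using hv1 a) z (fun _ => (z β)⁻¹) (fun _ => inv_ne_zero (hz β))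
      simpa [z, div_eq_mul_inv] using this
    rw [hmon, h1] at h2
    have h5 := (mul_eq_zero.1 h2.symm).resolve_left
      (pow_ne_zero _ (Finset.prod_ne_zero_iff.2 fun i _ => hzβ i))
    rw [h5, mul_zero] at h3
    exact h3

/-! ### Initial forms as weighted homogeneous components -/

/-- If `μ` is the minimal weight of a monomial of `f`, the initial form of `f` is its weighted
homogeneous component of weight `μ`; unlike `initw w`, that component is linear in `f`. -/
theorem initw_eq_component {σ : Type} [Fintype σ] (w : σ → ℤ) (f : MvPolynomial σ ℂ) (μ : ℤ)
    (hle : ∀ d ∈ f.support, μ ≤ Finsupp.weight w d)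
    (hex : ∃ d ∈ f.support, Finsupp.weight w d = μ) :
    initw w f = weightedHomogeneousComponent w μ f := by
  classical
  have hw : ∀ d : σ →₀ ℕ, ∑ i, w i * (d i : ℤ) = Finsupp.weight w d := by
    intro d
    rw [Finsupp.weight_apply, Finsupp.sum_fintype _ _ (by simp)]
    exact Finset.sum_congr rfl fun i _ => by rw [nsmul_eq_mul, mul_comm]
  rw [weightedHomogeneousComponent_apply, initw]
  simp only [hw]
  refine Finset.sum_congr (Finset.filter_congr fun d hd => ?_) fun _ _ => rfl
  constructor
  · intro h
    obtain ⟨d', hd', rfl⟩ := hex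
    exact le_antisymm (h d' hd') (hle d hd)
  · rintro rfl
    exact hle

/-- Value of the initial form of a constant plus a sum of distinct monomials whose minimal weight
`μ` is attained. The constant has weight `0`, so it drops out as soon as `μ < 0`. -/
theorem eval_initw_sum {σ ι : Type} [Fintype σ] (w : σ → ℤ) (s : Finset ι) (e : ι → σ →₀ ℕ)
    (he : Set.InjOn e s) (a : ι → ℂ) (ha : ∀ t ∈ s, a t ≠ 0) (u : ℂ) (μ : ℤ)
    (hμ : μ < 0 ∨ u = 0) (hle : ∀ t ∈ s, μ ≤ Finsupp.weight w (e t))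
    (hex : ∃ t ∈ s, Finsupp.weight w (e t) = μ) (p : σ → ℂ) :
    eval p (initw w (C u + ∑ t ∈ s, monomial (e t) (a t))) =
      ∑ t ∈ s with Finsupp.weight w (e t) = μ, a t * ∏ l, p l ^ e t l := by
  classical
  rw [initw_eq_component w _ μ]
  · rw [map_add, map_sum, map_add, map_sum]
    have hC : weightedHomogeneousComponent w μ (C u : MvPolynomial σ ℂ) = 0 := by
      rcases hμ with h | h
      · exact (isWeightedHomogeneous_C w u).weightedHomogeneousComponent_ne μ h.ne
      · simp [h]
    rw [hC, map_zero, zero_add, Finset.sum_filter]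
    refine Finset.sum_congr rfl fun t _ => ?_
    have hm := isWeightedHomogeneous_monomial w (e t) (a t) rfl
    split_ifs with h
    · rw [← h, hm.weightedHomogeneousComponent_same, eval_monomial,
        Finsupp.prod_fintype _ _ (by simp)]
    · rw [hm.weightedHomogeneousComponent_ne μ (Ne.symm h), map_zero]
  · intro d hd
    by_contra hlt
    rw [mem_support_iff, coeff_add, coeff_sum, coeff_C] at hd
    apply hd
    rw [Finset.sum_eq_zero, add_zero]
    · rcases hμ with h | h
      · rw [if_neg]
        rintro rfl
        rw [map_zero] at hlt
        omega
      · simp [h]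
    · intro t ht
      rw [coeff_monomial, if_neg]
      rintro rfl
      exact hlt (hle t ht)
  · obtain ⟨t, ht, hwt⟩ := hex
    refine ⟨e t, ?_, hwt⟩
    rw [mem_support_iff, coeff_add, coeff_sum, coeff_C, Finset.sum_eq_single_of_mem t ht,
      coeff_monomial, if_pos rfl]
    · have : (if 0 = e t then u else 0) = 0 := by
        rcases hμ with h | h
        · rw [if_neg]
          intro h0
          rw [← h0, map_zero] at hwt
          omega
        · simp [h]
      rw [this, zero_add]
      exact ha t ht
    · intro t' ht' hne
      rw [coeff_monomial, if_neg]
      exact fun h => hne (he ht' ht h)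

/-- A lower bound for `⟨a, ·⟩` on the support bounds `val_a` of the Newton polytope from below. -/
theorem valOf_ge {n : ℕ} (A : Finset (Fin n →₀ ℕ)) (hA : A.Nonempty) (c : (Fin n →₀ ℕ) → ℂ)
    (hc : ∀ α ∈ A, c α ≠ 0) (a : Fin n → ℤ) (B : ℤ)
    (hB : ∀ α ∈ A, B ≤ ∑ i, a i * (α i : ℤ)) :
    (B : ℝ) ≤ valOf a (newt (sparsePoly n A c)) := by
  classical
  have hco : ∀ d, coeff d (sparsePoly n A c) = if d ∈ A then c d else 0 := by
    intro d
    simp [sparsePoly, coeff_sum, coeff_monomial]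
  have hsupp : (sparsePoly n A c).support = A := by
    ext d
    rw [mem_support_iff, hco]
    by_cases hd : d ∈ A
    · simp [hd, hc d hd]
    · simp [hd]
  rw [valOf, newt, hsupp]
  refine le_csInf ?_ ?_
  · exact ((Set.Nonempty.image _ (Finset.coe_nonempty.2 hA)).convexHull).image _
  · rintro _ ⟨x, hx, rfl⟩
    let L : (Fin n → ℝ) →ₗ[ℝ] ℝ := ∑ i, (a i : ℝ) • LinearMap.proj i
    have hL : ∀ x, L x = wdot a x := by intro x; simp [L, wdot]
    have hsub : convexHull ℝ ((fun d : Fin n →₀ ℕ => fun i => ((d i : ℕ) : ℝ)) '' (A : Set _)) ⊆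
        {x | (B : ℝ) ≤ L x} := by
      refine convexHull_min ?_ (convex_halfSpace_ge L.isLinear _)
      rintro _ ⟨α, hα, rfl⟩
      change (B : ℝ) ≤ L _
      rw [hL, wdot]
      dsimp only
      exact_mod_cast hB α hα
    rw [← hL]
    exact hsub hx

/-! ### The Cayley configuration of the ML system -/

/-- The exponent vector of `λ_j x^α`, for `q = (j, α)`. -/
noncomputable def cayleyExp {n k : ℕ} (q : Fin k × (Fin n →₀ ℕ)) : Fin n ⊕ Fin k →₀ ℕ :=
  q.2.mapDomain Sum.inl + Finsupp.single (Sum.inr q.1) 1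

theorem cayleyExp_inl {n k : ℕ} (q : Fin k × (Fin n →₀ ℕ)) (i : Fin n) :
    cayleyExp q (Sum.inl i) = q.2 i := by
  simp [cayleyExp, Finsupp.mapDomain_apply Sum.inl_injective]

theorem cayleyExp_inr {n k : ℕ} (q : Fin k × (Fin n →₀ ℕ)) (j : Fin k) :
    cayleyExp q (Sum.inr j) = if q.1 = j then 1 else 0 := by
  classical
  simp [cayleyExp, Finsupp.mapDomain_of_notMem_range, Finsupp.single_apply]

theorem cayleyExp_injective {n k : ℕ} :
    Function.Injective (cayleyExp : Fin k × (Fin n →₀ ℕ) → _) := by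
  intro q q' h
  refine Prod.ext ?_ (Finsupp.ext fun i => ?_)
  · have := DFunLike.congr_fun h (Sum.inr q.1)
    simp only [cayleyExp_inr, if_true] at this
    by_contra hne
    rw [if_neg (Ne.symm hne)] at this
    exact one_ne_zero this
  · have := DFunLike.congr_fun h (Sum.inl i)
    simpa only [cayleyExp_inl] using this

/-- Expansion of `ℓ_i` into monomials. Since every exponent is at least `1`, every `λ_j x^α` occurs
in every `ℓ_i` (up to a coefficient `α_i ≠ 0`), so the set of monomials does not depend on `i`. -/
theorem mlEll_sparse (n k : ℕ) (A : Fin k → Finset (Fin n →₀ ℕ))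
    (hA1 : ∀ j, ∀ α ∈ A j, ∀ i, 1 ≤ α i) (T : Finset (Fin k × (Fin n →₀ ℕ)))
    (hT : ∀ q, q ∈ T ↔ q.2 ∈ A q.1) (c : Fin k → (Fin n →₀ ℕ) → ℂ) (u : Fin n → ℂ) (i : Fin n) :
    mlEll n k (fun j => sparsePoly n (A j) (c j)) u i =
      C (u i) + ∑ q ∈ T, monomial (cayleyExp q) (-(c q.1 q.2 * q.2 i)) := by
  have h := Finset.sum_finset_product' T Finset.univ A (by simpa using hT)
    (f := fun j α => monomial (cayleyExp (j, α)) (-(c j α * α i)))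
  refine Eq.trans ?_ (congrArg (fun z => C (u i) + z) h.symm)
  simp only [mlEll, sparsePoly, map_sum, pderiv_monomial, rename_monomial, Finset.mul_sum]
  rw [sub_eq_add_neg]
  simp only [← Finset.sum_neg_distrib]
  congr 1
  refine Finset.sum_congr rfl fun j _ => Finset.sum_congr rfl fun α hα => ?_
  rw [map_neg]
  congr 1
  rw [X, X, monomial_mul, monomial_mul]
  congr 1
  · have h1 : α = (α - Finsupp.single i 1) + Finsupp.single i 1 :=
      (tsub_add_cancel_of_le (by simpa using hA1 j α hα i)).symm
    rw [cayleyExp]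
    dsimp only
    conv_rhs => rw [h1, Finsupp.mapDomain_add, Finsupp.mapDomain_single]
    congr 1
    abel
  · ring

/-! ### The theorem -/

/-- for finite nonempty supports all of whose exponents have every
coordinate `≥ 1`, there is a nonzero polynomial `G` in the coefficients and data such
that whenever `G(c,u) ≠ 0`, for every nonzero `w = (a,b)` with
`min_j (b_j + val_a(Newt(f_j))) < 0`, the initial system `init_w(L(F))` has no
solutions in `(ℂ*)^{n+k}`. -/
theorem statement9 (n k : ℕ) (hk : 0 < k)
    (A : Fin k → Finset (Fin n →₀ ℕ)) (hA : ∀ j, (A j).Nonempty)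
    (hA1 : ∀ j, ∀ α ∈ A j, ∀ i, 1 ≤ α i) :
    ∃ G : MvPolynomial ((Fin k × (Fin n →₀ ℕ)) ⊕ Fin n) ℂ, G ≠ 0 ∧
      ∀ (c : Fin k → (Fin n →₀ ℕ) → ℂ) (u : Fin n → ℂ),
        eval (Sum.elim (fun p : Fin k × (Fin n →₀ ℕ) => c p.1 p.2) u) G ≠ 0 →
          ∀ (a : Fin n → ℤ) (b : Fin k → ℤ), Sum.elim a b ≠ 0 →
            Finset.univ.inf'
                (Finset.univ_nonempty_iff.mpr (Fin.pos_iff_nonempty.mp hk))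
                (fun j => (b j : ℝ) + valOf a (newt (sparsePoly n (A j) (c j)))) < 0 →
            ¬ ∃ p : Fin n ⊕ Fin k → ℂ, (∀ i, p i ≠ 0) ∧
                (∀ i, eval p (initw (Sum.elim a b)
                  (mlEll n k (fun j => sparsePoly n (A j) (c j)) u i)) = 0) ∧
                (∀ j, eval p (initw (Sum.elim a b)
                  (rename Sum.inl (sparsePoly n (A j) (c j)))) = 0) := by
  classical
  let Q := Fin k × (Fin n →₀ ℕ)
  let T : Finset Q := Finset.univ.biUnion fun j => (A j).image (Prod.mk j)
  have hT : ∀ q : Q, q ∈ T ↔ q.2 ∈ A q.1 := by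
    rintro ⟨j, α⟩
    simp only [T, Finset.mem_biUnion, Finset.mem_univ, true_and, Finset.mem_image]
    constructor
    · rintro ⟨_, _, h, h_eq⟩
      cases h_eq
      exact h
    · exact fun h => ⟨j, α, h, rfl⟩
  -- one discriminant for each set `U` of exponents that can carry the minimal weight
  have hdisc : ∀ U : Finset Q, ∃ G : MvPolynomial {q // q ∈ U} ℂ, G ≠ 0 ∧ (U.Nonempty →
      ∀ (c : {q // q ∈ U} → ℂ) (s : Fin n ⊕ Fin k → ℂ), (∀ i, c i ≠ 0) → (∀ l, s l ≠ 0) →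
      (∀ l, ∑ i, c i * (∏ l', s l' ^ (cayleyExp i.1 l' : ℤ)) * ((cayleyExp i.1 l : ℤ) : ℂ) = 0) →
        eval c G = 0) := by
    intro U
    by_cases hU : U.Nonempty
    · have : Nonempty {q // q ∈ U} := hU.to_subtype
      obtain ⟨G, hG, hG'⟩ := exists_discriminant (I := {q // q ∈ U})
        (fun i l => (cayleyExp i.1 l : ℤ)) (Sum.elim (fun _ => 0) (fun _ => 1)) (by
          intro i
          simp [cayleyExp_inr])
      exact ⟨G, hG, fun _ => hG'⟩
    · exact ⟨1, one_ne_zero, fun h => absurd h hU⟩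
  choose D hD0 hD using hdisc
  let ι : ∀ U : Finset Q, {q // q ∈ U} → Q ⊕ Fin n := fun U q => Sum.inl q.1
  have hι : ∀ U, Function.Injective (ι U) := fun U q q' h =>
    Subtype.ext (Sum.inl_injective h)
  refine ⟨(∏ q ∈ T, X (Sum.inl q)) * ∏ U ∈ T.powerset, rename (ι U) (D U), ?_, ?_⟩
  · refine mul_ne_zero (Finset.prod_ne_zero_iff.2 fun q _ => X_ne_zero _)
      (Finset.prod_ne_zero_iff.2 fun U _ => ?_)
    rw [Ne, ← map_zero (rename (ι U)), (rename_injective _ (hι U)).eq_iff]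
    exact hD0 U
  rintro c u hG a b - hneg ⟨p, hp, hell, hf⟩
  rw [map_mul, map_prod, map_prod] at hG
  have hc : ∀ j, ∀ α ∈ A j, c j α ≠ 0 := by
    intro j α hα
    have := Finset.prod_ne_zero_iff.1 (left_ne_zero_of_mul hG) (j, α) ((hT _).2 hα)
    simpa using this
  have hDU : ∀ U ⊆ T, eval (fun q : {q // q ∈ U} => c q.1.1 q.1.2) (D U) ≠ 0 := by
    intro U hU
    have := Finset.prod_ne_zero_iff.1 (right_ne_zero_of_mul hG) U (Finset.mem_powerset.2 hU)
    rw [eval_rename] at this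
    exact this
  set w : Fin n ⊕ Fin k → ℤ := Sum.elim a b with hw
  have hwt0 : ∀ α : Fin n →₀ ℕ, Finsupp.weight w (α.mapDomain Sum.inl) = ∑ i, a i * (α i : ℤ) := by
    intro α
    rw [Finsupp.weight_apply, Finsupp.sum_mapDomain_index (by simp) (by intros; rw [add_smul]),
      Finsupp.sum_fintype _ _ (by simp)]
    exact Finset.sum_congr rfl fun i _ => by simp [hw, mul_comm]
  have hwt : ∀ q : Q, Finsupp.weight w (cayleyExp q) =
      Finsupp.weight w (q.2.mapDomain Sum.inl) + b q.1 := by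
    intro q
    rw [cayleyExp, map_add]
    congr 1
    simp [Finsupp.weight_apply, hw]
  -- the minimal weight `μ` of the monomials `λ_j x^α` is negative
  have hTne : T.Nonempty := by
    obtain ⟨α, hα⟩ := hA ⟨0, hk⟩
    exact ⟨(⟨0, hk⟩, α), (hT _).2 hα⟩
  obtain ⟨q₀, hq₀, hmin⟩ := T.exists_min_image (fun q => Finsupp.weight w (cayleyExp q)) hTne
  obtain ⟨μ, hμ⟩ : ∃ μ, Finsupp.weight w (cayleyExp q₀) = μ := ⟨_, rfl⟩
  rw [hμ] at hmin
  have hμneg : μ < 0 := by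
    by_contra! hμ0
    refine hneg.not_ge (Finset.le_inf' _ _ fun j _ => ?_)
    have := valOf_ge (A j) (hA j) (c j) (hc j) a (-b j) (fun α hα => by
      have h1 := hmin (j, α) ((hT _).2 hα)
      rw [hwt, hwt0] at h1
      dsimp only at h1
      linarith)
    push_cast at this
    linarith
  let U : Finset Q := T.filter fun q => Finsupp.weight w (cayleyExp q) = μ
  have hUne : U.Nonempty := ⟨q₀, Finset.mem_filter.2 ⟨hq₀, hμ⟩⟩
  refine hDU U (Finset.filter_subset _ _) (hD U hUne _ p (fun q => ?_) hp fun l => ?_)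
  · exact hc _ _ ((hT _).1 (Finset.mem_filter.1 q.2).1)
  -- the Cayley relations of `U` follow from the initial system at `p`
  have hsum := Finset.sum_coe_sort U fun q : Q =>
    c q.1 q.2 * (∏ l', p l' ^ (cayleyExp q l' : ℤ)) * ((cayleyExp q l : ℤ) : ℂ)
  refine hsum.trans ?_
  simp only [zpow_natCast, Int.cast_natCast]
  rcases l with i | j
  · have h1 := hell i
    rw [mlEll_sparse n k A hA1 T hT,
      eval_initw_sum w T cayleyExp cayleyExp_injective.injOn _ (fun q hq => ?_) _ μ (Or.inl hμneg)
        hmin ⟨q₀, hq₀, hμ⟩ p] at h1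
    · rw [← neg_eq_zero, ← h1, ← Finset.sum_neg_distrib]
      refine Finset.sum_congr rfl fun q _ => ?_
      rw [cayleyExp_inl]; ring
    · have hq' := (hT q).1 hq
      have := hA1 _ _ hq' i
      exact neg_ne_zero.2 (mul_ne_zero (hc _ _ hq') (by exact_mod_cast (by omega)))
  · by_cases hj : ∃ q ∈ U, q.1 = j
    swap
    · refine Finset.sum_eq_zero fun q hq => ?_
      rw [cayleyExp_inr, if_neg fun h => hj ⟨q, hq, h⟩]
      simp
    obtain ⟨⟨_, α₀⟩, hq, rfl⟩ := hj
    dsimp only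
    rename_i j
    obtain ⟨hqT, hqμ⟩ := Finset.mem_filter.1 hq
    have h1 := hf j
    have h2 : rename (Sum.inl : Fin n → Fin n ⊕ Fin k) (sparsePoly n (A j) (c j)) =
        C 0 + ∑ α ∈ A j, monomial (α.mapDomain Sum.inl) (c j α) := by
      simp [sparsePoly, map_sum, rename_monomial]
    rw [h2, eval_initw_sum w (A j) _ (Finsupp.mapDomain_injective Sum.inl_injective).injOn _
      (hc j) 0 (μ - b j) (Or.inr rfl) (fun α hα => by
        have := hmin (j, α) ((hT _).2 hα)
        rw [hwt] at this
        dsimp only at this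
        linarith) ⟨α₀, (hT _).1 hqT, by
        rw [hwt] at hqμ
        dsimp only at hqμ
        linarith⟩ p] at h1
    have h3 := congrArg (fun z => p (Sum.inr j) * z) h1
    simp only [mul_zero, Finset.mul_sum, Finset.sum_filter] at h3
    rw [← h3]
    have h4 := Finset.sum_finset_product' T Finset.univ A (fun q => by simpa using hT q)
      (f := fun j' α => if Finsupp.weight w (cayleyExp (j', α)) = μ then
        c j' α * (∏ l', p l' ^ cayleyExp (j', α) l') * ((cayleyExp (j', α) (Sum.inr j) : ℕ) : ℂ)
        else 0)
    rw [Finset.sum_filter]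
    refine h4.trans ?_
    rw [Finset.sum_eq_single_of_mem j (Finset.mem_univ _)]
    · refine Finset.sum_congr rfl fun α _ => ?_
      have h5 : (Finsupp.weight w (cayleyExp (j, α)) = μ) =
          (Finsupp.weight w (α.mapDomain Sum.inl) = μ - b j) := by
        rw [hwt, eq_sub_iff_add_eq]
      simp only [h5]
      have h6 : ∏ l', p l' ^ cayleyExp (j, α) l' =
          (∏ l', p l' ^ (α.mapDomain Sum.inl : Fin n ⊕ Fin k →₀ ℕ) l') * p (Sum.inr j) := by
        simp only [cayleyExp, Finsupp.add_apply, pow_add, Finset.prod_mul_distrib]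
        congr 1
        rw [Finset.prod_eq_single_of_mem (Sum.inr j) (Finset.mem_univ _)]
        · simp
        · intro l _ hl
          rw [Finsupp.single_eq_of_ne hl, pow_zero]
      rw [h6, cayleyExp_inr]
      rw [if_pos rfl]
      split_ifs
      · push_cast
        ring
      · rw [mul_zero]
    · intro j' _ hj'
      refine Finset.sum_eq_zero fun α _ => ?_
      rw [cayleyExp_inr, if_neg hj']
      simp
end
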